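/- Let t ∈ F, t ≠ 0. An invertible 𝔽_q-linear map g : F → F is conjugate to f_{t,0} in GL(V) if and only if g = f_{t,0}, or g = f_{t^q,0}, or g = L_{t,s} for some s ∈ F with s ≠ 0 and s^{q+1} ≠ 1. -/

import Mathlib

/-!
Let `σ` be the involution `x ↦ x ^ q` of `F`. Every map that is linear over the fixed field of `σ`
has the form `x ↦ a * x + b * σ x`. Composing it, on either side, with
`x ↦ σ a * x - b * σ x` gives multiplication by `a * σ a - b * σ b`, so it is bijective exactly
when this scalar is nonzero, and then its inverse is explicit. Conjugating multiplication by `t`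
gives a formula that depends only on the ratio `a : b`; the ratios `1 : 0`, `0 : 1` and `s : 1`
with `s ≠ 0` yield the three cases.
-/

section Involution

variable {F : Type*} [Field F] {σ : F →+* F} {a b t w : F}

/-- The map `f_{a,b}`, with an arbitrary endomorphism `σ` of `F` in place of `x ↦ x ^ q`. -/
def linearizedBinomial (σ : F →+* F) (a b : F) : F → F := fun x => a * x + b * σ x

/-- The conjugate `f_{a,b}⁻¹ ∘ f_{t,0} ∘ f_{a,b}`, by its explicit formula; it has this meaning
only for an involution `σ` with `a * σ a ≠ b * σ b`. The map `L_{t,s}` is the case `a = s`,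
`b = 1`. -/
def conjLinearizedBinomial (σ : F →+* F) (t a b : F) : F → F :=
  linearizedBinomial σ ((t * (a * σ a) - σ t * (b * σ b)) / (a * σ a - b * σ b))
    ((t - σ t) * (σ a * b) / (a * σ a - b * σ b))

theorem linearizedBinomial_add (x y : F) :
    linearizedBinomial σ a b (x + y) = linearizedBinomial σ a b x + linearizedBinomial σ a b y := by
  simp only [linearizedBinomial, map_add]
  ring

theorem linearizedBinomial_mul_of_fixed {c : F} (hc : σ c = c) (x : F) :
    linearizedBinomial σ a b (c * x) = c * linearizedBinomial σ a b x := by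
  simp only [linearizedBinomial, map_mul, hc]
  ring

theorem eq_zero_of_linearizedBinomial_eq_zero (hσ_ne : σ ≠ RingHom.id F)
    (hzero : ∀ x, linearizedBinomial σ a b x = 0) : a = 0 ∧ b = 0 := by
  obtain ⟨w, hw⟩ : ∃ w, σ w ≠ w := by simpa [RingHom.ext_iff] using hσ_ne
  have at_one : a + b = 0 := by simpa [linearizedBinomial] using hzero 1
  have at_w : a * w + b * σ w = 0 := hzero w
  have hb : b = 0 := by
    refine (mul_eq_zero.mp ?_).resolve_right (sub_ne_zero.mpr hw)
    linear_combination at_w - w * at_one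
  exact ⟨by simpa [hb] using at_one, hb⟩

theorem exists_linearizedBinomial_interpolating (hw : σ w ≠ w) (u v : F) :
    ∃ a b, linearizedBinomial σ a b 1 = u ∧ linearizedBinomial σ a b w = v := by
  have hw' : σ w - w ≠ 0 := sub_ne_zero.mpr hw
  refine ⟨u - (v - w * u) / (σ w - w), (v - w * u) / (σ w - w), ?_, ?_⟩
  · simp [linearizedBinomial]
  · simp only [linearizedBinomial]
    field_simp
    ring

theorem exists_fixed_coords (hσ : Function.Involutive σ) (hw : σ w ≠ w) (x : F) :
    ∃ c d, σ c = c ∧ σ d = d ∧ x = c * 1 + d * w := by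
  have hw' : σ w - w ≠ 0 := sub_ne_zero.mpr hw
  obtain ⟨d, hd⟩ : ∃ d, d = (σ x - x) / (σ w - w) := ⟨_, rfl⟩
  have d_fixed : σ d = d := by
    rw [hd, map_div₀, map_sub, map_sub, hσ, hσ, ← neg_sub, ← neg_sub (σ w), neg_div_neg_eq]
  have d_mul : d * (σ w - w) = σ x - x := by rw [hd, div_mul_cancel₀ _ hw']
  refine ⟨x - d * w, d, ?_, d_fixed, by ring⟩
  rw [map_sub, map_mul, d_fixed]
  linear_combination -d_mul

theorem exists_eq_linearizedBinomial (hσ : Function.Involutive σ) (hσ_ne : σ ≠ RingHom.id F)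
    {h : F → F} (h_add : ∀ x y, h (x + y) = h x + h y)
    (h_mul : ∀ c x, σ c = c → h (c * x) = c * h x) :
    ∃ a b, h = linearizedBinomial σ a b := by
  obtain ⟨w, hw⟩ : ∃ w, σ w ≠ w := by simpa [RingHom.ext_iff] using hσ_ne
  obtain ⟨a, b, at_one, at_w⟩ := exists_linearizedBinomial_interpolating hw (h 1) (h w)
  refine ⟨a, b, funext fun x => ?_⟩
  obtain ⟨c, d, hc, hd, rfl⟩ := exists_fixed_coords hσ hw x
  rw [h_add, h_mul c 1 hc, h_mul d w hd, linearizedBinomial_add,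
    linearizedBinomial_mul_of_fixed hc, linearizedBinomial_mul_of_fixed hd, at_one, at_w]

theorem linearizedBinomial_apply_adjugate (hσ : Function.Involutive σ) (a b x : F) :
    linearizedBinomial σ a b (linearizedBinomial σ (σ a) (-b) x) =
      (a * σ a - b * σ b) * x := by
  simp only [linearizedBinomial, map_add, map_mul, map_neg, hσ _]
  ring

theorem adjugate_apply_linearizedBinomial (hσ : Function.Involutive σ) (a b x : F) :
    linearizedBinomial σ (σ a) (-b) (linearizedBinomial σ a b x) =
      (a * σ a - b * σ b) * x := by
  simp only [linearizedBinomial, map_add, map_mul, hσ _]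
  ring

theorem linearizedBinomial_bijective_iff (hσ : Function.Involutive σ)
    (hσ_ne : σ ≠ RingHom.id F) :
    Function.Bijective (linearizedBinomial σ a b) ↔ a * σ a ≠ b * σ b := by
  constructor
  · intro h_bij h_eq
    have adjugate_zero (x : F) : linearizedBinomial σ (σ a) (-b) x = 0 := by
      apply h_bij.injective
      rw [linearizedBinomial_apply_adjugate hσ, h_eq]
      simp [linearizedBinomial]
    obtain ⟨ha, hb⟩ := eq_zero_of_linearizedBinomial_eq_zero hσ_ne adjugate_zero
    rw [map_eq_zero] at ha
    rw [neg_eq_zero] at hb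
    exact zero_ne_one (h_bij.injective (by simp [linearizedBinomial, ha, hb]))
  · intro h_ne
    have det_ne : a * σ a - b * σ b ≠ 0 := sub_ne_zero.mpr h_ne
    constructor
    · intro x y hxy
      apply mul_left_cancel₀ det_ne
      rw [← adjugate_apply_linearizedBinomial hσ, hxy, adjugate_apply_linearizedBinomial hσ]
    · intro y
      refine ⟨linearizedBinomial σ (σ a) (-b) (y / (a * σ a - b * σ b)), ?_⟩
      rw [linearizedBinomial_apply_adjugate hσ, mul_div_cancel₀ _ det_ne]

theorem conjLinearizedBinomial_apply (hσ : Function.Involutive σ) (t a b x : F) :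
    conjLinearizedBinomial σ t a b x =
      (a * σ a - b * σ b)⁻¹ *
        linearizedBinomial σ (σ a) (-b) (t * linearizedBinomial σ a b x) := by
  simp only [conjLinearizedBinomial, linearizedBinomial, map_add, map_mul, hσ _]
  ring

theorem semiconj_linearizedBinomial_iff (hσ : Function.Involutive σ)
    (hab : a * σ a ≠ b * σ b) {g : F → F} :
    Function.Semiconj (linearizedBinomial σ a b) g (t * ·) ↔
      g = conjLinearizedBinomial σ t a b := by
  have det_ne : a * σ a - b * σ b ≠ 0 := sub_ne_zero.mpr hab
  constructor
  · intro h_semiconj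
    funext x
    have h_apply : linearizedBinomial σ a b (g x) = t * linearizedBinomial σ a b x := h_semiconj x
    rw [conjLinearizedBinomial_apply hσ, ← h_apply, adjugate_apply_linearizedBinomial hσ,
      inv_mul_cancel_left₀ det_ne]
  · rintro rfl x
    have det_inv_fixed : σ (a * σ a - b * σ b)⁻¹ = (a * σ a - b * σ b)⁻¹ := by
      simp only [map_inv₀, map_sub, map_mul, hσ _, mul_comm]
    rw [conjLinearizedBinomial_apply hσ, linearizedBinomial_mul_of_fixed det_inv_fixed,
      linearizedBinomial_apply_adjugate hσ, inv_mul_cancel_left₀ det_ne]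

theorem exists_semiconj_mul_iff (hσ : Function.Involutive σ) (hσ_ne : σ ≠ RingHom.id F)
    {g : F → F} :
    (∃ h : F → F, (∀ x y, h (x + y) = h x + h y) ∧ (∀ c x, σ c = c → h (c * x) = c * h x) ∧
        Function.Bijective h ∧ Function.Semiconj h g (t * ·)) ↔
      ∃ a b, a * σ a ≠ b * σ b ∧ g = conjLinearizedBinomial σ t a b := by
  constructor
  · rintro ⟨h, h_add, h_mul, h_bij, h_semiconj⟩
    obtain ⟨a, b, rfl⟩ := exists_eq_linearizedBinomial hσ hσ_ne h_add h_mul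
    have hab := (linearizedBinomial_bijective_iff hσ hσ_ne).mp h_bij
    exact ⟨a, b, hab, (semiconj_linearizedBinomial_iff hσ hab).mp h_semiconj⟩
  · rintro ⟨a, b, hab, hg⟩
    exact ⟨linearizedBinomial σ a b, linearizedBinomial_add,
      fun c x hc => linearizedBinomial_mul_of_fixed hc x,
      (linearizedBinomial_bijective_iff hσ hσ_ne).mpr hab,
      (semiconj_linearizedBinomial_iff hσ hab).mpr hg⟩

theorem conjLinearizedBinomial_zero_right (ha : a ≠ 0) :
    conjLinearizedBinomial σ t a 0 = fun x => t * x := by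
  funext x
  simp [conjLinearizedBinomial, linearizedBinomial, ha]

theorem conjLinearizedBinomial_zero_left (hb : b ≠ 0) :
    conjLinearizedBinomial σ t 0 b = fun x => σ t * x := by
  funext x
  simp [conjLinearizedBinomial, linearizedBinomial, hb]

theorem conjLinearizedBinomial_one_right (s : F) :
    conjLinearizedBinomial σ t s 1 = fun x =>
      (t * (s * σ s) - σ t) / (s * σ s - 1) * x + (t - σ t) * σ s / (s * σ s - 1) * σ x := by
  funext x
  simp only [conjLinearizedBinomial, linearizedBinomial, map_one, mul_one]

theorem conjLinearizedBinomial_mul_mul {c : F} (hc : c ≠ 0) :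
    conjLinearizedBinomial σ t (c * a) (c * b) = conjLinearizedBinomial σ t a b := by
  have norm_ne : c * σ c ≠ 0 := mul_ne_zero hc ((map_ne_zero σ).mpr hc)
  have det_eq : c * a * σ (c * a) - c * b * σ (c * b) = c * σ c * (a * σ a - b * σ b) := by
    simp only [map_mul]
    ring
  have fst_eq : t * (c * a * σ (c * a)) - σ t * (c * b * σ (c * b)) =
      c * σ c * (t * (a * σ a) - σ t * (b * σ b)) := by
    simp only [map_mul]
    ring
  have snd_eq : (t - σ t) * (σ (c * a) * (c * b)) = c * σ c * ((t - σ t) * (σ a * b)) := by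
    simp only [map_mul]
    ring
  rw [conjLinearizedBinomial, det_eq, fst_eq, snd_eq, mul_div_mul_left _ _ norm_ne,
    mul_div_mul_left _ _ norm_ne, conjLinearizedBinomial]

theorem exists_eq_conjLinearizedBinomial_iff {g : F → F} :
    (∃ a b, a * σ a ≠ b * σ b ∧ g = conjLinearizedBinomial σ t a b) ↔
      (g = fun x => t * x) ∨ (g = fun x => σ t * x) ∨
        ∃ s, s ≠ 0 ∧ s * σ s ≠ 1 ∧ g = conjLinearizedBinomial σ t s 1 := by
  constructor
  · rintro ⟨a, b, hab, rfl⟩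
    rcases eq_or_ne b 0 with rfl | hb
    · exact .inl (conjLinearizedBinomial_zero_right (by rintro rfl; simp at hab))
    rcases eq_or_ne a 0 with rfl | ha
    · exact .inr (.inl (conjLinearizedBinomial_zero_left hb))
    obtain ⟨s, rfl⟩ : ∃ s, a = b * s := ⟨a / b, (mul_div_cancel₀ a hb).symm⟩
    refine .inr (.inr ⟨s, right_ne_zero_of_mul ha, fun hs => hab ?_, ?_⟩)
    · rw [map_mul]
      linear_combination b * σ b * hs
    · simpa only [mul_one] using conjLinearizedBinomial_mul_mul (a := s) (b := 1) hb
  · rintro (rfl | rfl | ⟨s, -, hs, rfl⟩)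
    · exact ⟨1, 0, by simp, (conjLinearizedBinomial_zero_right one_ne_zero).symm⟩
    · exact ⟨0, 1, by simp, (conjLinearizedBinomial_zero_left one_ne_zero).symm⟩
    · exact ⟨s, 1, by simpa using hs, rfl⟩

theorem conjugate_to_f_t0_iff_general (hσ : Function.Involutive σ) (hσ_ne : σ ≠ RingHom.id F)
    (t : F) (g : F → F) :
    (∃ h : F → F, (∀ x y, h (x + y) = h x + h y) ∧ (∀ c x, σ c = c → h (c * x) = c * h x) ∧
        Function.Bijective h ∧ ∀ x, h (g x) = t * h x) ↔
      (g = fun x => t * x) ∨ (g = fun x => σ t * x) ∨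
        ∃ s, s ≠ 0 ∧ s * σ s ≠ 1 ∧
          g = fun x => (t * (s * σ s) - σ t) / (s * σ s - 1) * x +
            (t - σ t) * σ s / (s * σ s - 1) * σ x := by
  simp only [← conjLinearizedBinomial_one_right]
  exact (exists_semiconj_mul_iff hσ hσ_ne).trans exists_eq_conjLinearizedBinomial_iff

end Involution

section FiniteField

variable {F : Type*} [Field F] [Fintype F] {q : ℕ}

theorem exists_ringHom_eq_pow {n : ℕ} (hq : IsPrimePow q) (hF : Fintype.card F = q ^ n) :
    ∃ σ : F →+* F, ∀ x, σ x = x ^ q := by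
  obtain ⟨p, k, hp, -, rfl⟩ := hq
  have : Fact p.Prime := ⟨hp.nat_prime⟩
  have : CharP F p := charP_of_card_eq_prime_pow (hF.trans (pow_mul p k n).symm)
  exact ⟨iterateFrobenius F p k, iterateFrobenius_def p k⟩

theorem exists_pow_ne_self (hq : 1 < q) (hF : q < Fintype.card F) : ∃ x : F, x ^ q ≠ x := by
  by_contra! h_pow
  have card_dvd : Fintype.card F - 1 ∣ q - 1 := by
    rw [← FiniteField.forall_pow_eq_one_iff]
    intro x
    apply mul_right_cancel (b := x)
    rw [pow_sub_one_mul (by lia), one_mul, Units.ext_iff, Units.val_pow_eq_pow_val, h_pow]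
  have card_le := Nat.le_of_dvd (by lia) card_dvd
  lia

theorem exists_involutive_ringHom_eq_pow (hq : IsPrimePow q) (hF : Fintype.card F = q ^ 2) :
    ∃ σ : F →+* F, Function.Involutive σ ∧ σ ≠ RingHom.id F ∧ ∀ x, x ^ q = σ x := by
  obtain ⟨σ, hσ⟩ := exists_ringHom_eq_pow hq hF
  refine ⟨σ, fun x => ?_, ?_, fun x => (hσ x).symm⟩
  · rw [hσ, hσ, ← pow_mul, ← sq, ← hF, FiniteField.pow_card]
  · rintro rfl
    obtain ⟨x, hx⟩ := exists_pow_ne_self hq.one_lt (hF ▸ lt_self_pow₀ hq.one_lt one_lt_two)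
    exact hx (hσ x).symm

end FiniteField

/-- Let `q` be a prime power and `F` a finite field with `q^2` elements, regarded as a
2-dimensional vector space over the subfield `𝔽_q = {x : x^q = x}`.  Let `t ∈ F`, `t ≠ 0`.
An invertible `𝔽_q`-linear map `g : F → F` is conjugate to `f_{t,0}` in `GL(V)` if and only
if `g = f_{t,0}`, or `g = f_{t^q,0}`, or `g = L_{t,s}` for some `s ≠ 0` with `s^(q+1) ≠ 1`. -/
theorem conjugate_to_f_t0_iff (q : ℕ) (hq : IsPrimePow q) (F : Type*) [Field F] [Fintype F]
    (hF : Fintype.card F = q ^ 2) (t : F) (ht : t ≠ 0) (g : F → F)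
    (hgadd : ∀ x y : F, g (x + y) = g x + g y)
    (hgsmul : ∀ c x : F, c ^ q = c → g (c * x) = c * g x)
    (hgbij : Function.Bijective g) :
    (∃ h : F → F, (∀ x y : F, h (x + y) = h x + h y) ∧
        (∀ c x : F, c ^ q = c → h (c * x) = c * h x) ∧
        Function.Bijective h ∧ ∀ x : F, h (g x) = t * h x) ↔
      (g = fun x : F => t * x) ∨ (g = fun x : F => t ^ q * x) ∨
        ∃ s : F, s ≠ 0 ∧ s ^ (q + 1) ≠ 1 ∧
          g = fun x : F => ((t * s ^ (q + 1) - t ^ q) / (s ^ (q + 1) - 1)) * x +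
            ((t - t ^ q) * s ^ q / (s ^ (q + 1) - 1)) * x ^ q := by
  obtain ⟨σ, hσ, hσ_ne, h_pow⟩ := exists_involutive_ringHom_eq_pow hq hF
  simpa only [pow_succ', h_pow] using conjugate_to_f_t0_iff_general hσ hσ_ne t g
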